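/- Let d ≥ 2. There exist constants C > 1 and 0 < c < 1, depending only on d, such that for every odd prime power q, every j ∈ F_q with j ≠ 0, every E ⊆ S_j, and every F ⊆ F_q^d with |E||F| ≥ C q^d, one has |Π(E,F)| ≥ c q. -/

import Mathlib

open Finset

noncomputable section

/-- dot product on `Fin d → K` -/
def fqDot {K : Type} [Field K] {d : ℕ} (x y : Fin d → K) : K := ∑ i, x i * y i

/-- dot product set Π(E,F) -/
def dotSet {K : Type} [Field K] [DecidableEq K] {d : ℕ}
    (E F : Finset (Fin d → K)) : Finset K :=
  (E ×ˢ F).image fun p => fqDot p.1 p.2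

/-- punctured line through the origin and x -/
def lineThrough {K : Type} [Field K] [Fintype K] [DecidableEq K] {d : ℕ}
    (x : Fin d → K) : Finset (Fin d → K) :=
  univ.filter fun y => ∃ s : K, s ≠ 0 ∧ y = s • x

/-- Fourier transform of the indicator of F -/
def ftransform {K : Type} [Field K] [Fintype K] {d : ℕ}
    (ψ : AddChar K ℂ) (F : Finset (Fin d → K)) (m : Fin d → K) : ℂ :=
  ((Fintype.card K : ℂ) ^ d)⁻¹ * ∑ x ∈ F, ψ (-(fqDot x m))

/-- the quantity 𝔅(E,F) -/
def Bquant {K : Type} [Field K] [Fintype K] [DecidableEq K] {d : ℕ}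
    (ψ : AddChar K ℂ) (E F : Finset (Fin d → K)) : ℝ :=
  ∑ x ∈ univ.filter (fun x : Fin d → K => x ≠ 0),
    ((E ∩ lineThrough x).card : ℝ) * ‖ftransform ψ F x‖ ^ 2
/-- sphere of radius j in F_q^d -/
def sphereF {K : Type} [Field K] [Fintype K] [DecidableEq K] {d : ℕ} (j : K) :
    Finset (Fin d → K) :=
  univ.filter fun x => ∑ i, x i ^ 2 = j

/-!
The proof is a second-moment argument. For `z ∈ K^d` let `V(z)` be the (unnormalised) variance
`∑ t, (#{y ∈ F : z·y = t} - |F|/q)²`. A count of triples `(z, y, y')` with `z·(y - y') = 0` gives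
`∑ z, V(z) = |F| q^(d-1) (q-1)` (`card_mul_sum_dotVar`). Since `V(s z) = V(z)` for `s ≠ 0`, and
every vector is of the form `s x` with `x` on a sphere of nonzero radius in at most two ways
(`s²` is determined), `(q-1) ∑ x ∈ E, V(x) ≤ 2 ∑ z, V(z)`, hence
`∑ x ∈ E, V(x) ≤ 2 |F| q^(d-1)` (`card_mul_sum_dotVar_sphere`).

Let `ν(t)` be the number of `(x, y) ∈ E × F` with `x·y = t`. By Cauchy-Schwarz,
`∑ t, (ν(t) - |E||F|/q)² ≤ |E| ∑ x ∈ E, V(x) ≤ 2 |E||F| q^(d-1)`. Each `t ∉ Π(E,F)` contributes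
`(|E||F|/q)²` to the left side, so `q - |Π(E,F)| ≤ 2 q^(d+1) / (|E||F|) ≤ q/2` as soon as
`|E||F| ≥ 4 q^d`.
-/

section Helpers

variable {K : Type} [Field K] {d : ℕ}

lemma fqDot_smul_left (s : K) (x y : Fin d → K) : fqDot (s • x) y = s * fqDot x y := by
  simp [fqDot, Finset.mul_sum, mul_assoc]

lemma fqDot_add_left (x x' y : Fin d → K) : fqDot (x + x') y = fqDot x y + fqDot x' y := by
  simp [fqDot, add_mul, Finset.sum_add_distrib]

lemma fqDot_sub_right (x y y' : Fin d → K) : fqDot x (y - y') = fqDot x y - fqDot x y' := by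
  simp [fqDot, mul_sub]

variable [Fintype K]

lemma card_field_pos : (0 : ℝ) < Fintype.card K := by
  exact_mod_cast Fintype.card_pos

variable [DecidableEq K]

/-- The number of `y ∈ F` on the hyperplane `z·y = t`. -/
def dotCount (F : Finset (Fin d → K)) (z : Fin d → K) (t : K) : ℝ :=
  ∑ y ∈ F, if fqDot z y = t then 1 else 0

/-- The unnormalised variance of the fibre sizes of `y ↦ z·y` on `F`: the squared `ℓ²` distance of `t ↦ #{y ∈ F : z·y = t}` from the constant function `|F|/q`. -/
def dotVar (F : Finset (Fin d → K)) (z : Fin d → K) : ℝ :=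
  ∑ t : K, (dotCount F z t - (F.card : ℝ) / Fintype.card K) ^ 2

lemma sum_dotCount (F : Finset (Fin d → K)) (z : Fin d → K) :
    ∑ t : K, dotCount F z t = F.card := by
  unfold dotCount
  rw [Finset.sum_comm]
  simp

lemma sum_dotCount_sq (F : Finset (Fin d → K)) (z : Fin d → K) :
    ∑ t : K, dotCount F z t ^ 2
      = ∑ y ∈ F, ∑ y' ∈ F, if fqDot z (y - y') = 0 then (1 : ℝ) else 0 := by
  unfold dotCount
  simp_rw [sq, Finset.sum_mul_sum]
  rw [Finset.sum_comm]
  refine Finset.sum_congr rfl fun y _ => ?_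
  rw [Finset.sum_comm]
  refine Finset.sum_congr rfl fun y' _ => ?_
  simp [fqDot_sub_right, sub_eq_zero, eq_comm]

lemma dotVar_eq (F : Finset (Fin d → K)) (z : Fin d → K) :
    dotVar F z = (∑ y ∈ F, ∑ y' ∈ F, if fqDot z (y - y') = 0 then (1 : ℝ) else 0)
      - (F.card : ℝ) ^ 2 / Fintype.card K := by
  have hq := (card_field_pos (K := K)).ne'
  rw [← sum_dotCount_sq]
  unfold dotVar
  simp_rw [sub_sq]
  rw [Finset.sum_add_distrib, Finset.sum_sub_distrib, ← Finset.sum_mul, ← Finset.mul_sum,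
    sum_dotCount]
  simp only [Finset.sum_const, Finset.card_univ, nsmul_eq_mul]
  field_simp
  ring

/-- A hyperplane through the origin has `q^(d-1)` points: translating by multiples of a vector `w`
with `w·v = 1` shows that all `q` fibres of `z ↦ z·v` have the same size. -/
lemma card_hyperplane {v : Fin d → K} (hv : v ≠ 0) :
    (Fintype.card K : ℝ) * ∑ z : Fin d → K, (if fqDot z v = 0 then (1 : ℝ) else 0)
      = (Fintype.card K : ℝ) ^ d := by
  obtain ⟨i, hi⟩ := Function.ne_iff.mp hv
  have hi' : v i ≠ 0 := hi
  have hw : fqDot (Pi.single i (v i)⁻¹) v = 1 := by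
    simp [fqDot, Pi.single_apply, hi']
  have key : ∀ t : K, ∑ z : Fin d → K, (if fqDot z v = t then (1 : ℝ) else 0)
      = ∑ z : Fin d → K, (if fqDot z v = 0 then (1 : ℝ) else 0) := by
    intro t
    rw [← Equiv.sum_comp (Equiv.addRight (t • (Pi.single i (v i)⁻¹ : Fin d → K)))]
    refine Finset.sum_congr rfl fun z _ => ?_
    simp [fqDot_add_left, fqDot_smul_left, hw]
  have h2 : ∑ t : K, ∑ z : Fin d → K, (if fqDot z v = t then (1 : ℝ) else 0)
      = (Fintype.card K : ℝ) ^ d := by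
    rw [Finset.sum_comm]
    simp
  rw [← h2]
  simp_rw [key]
  simp

/-- The diagonal `y = y'` gives `|F| q^d` and each of the `|F|² - |F|` other pairs `q^(d-1)`. -/
lemma card_mul_sum_dotVar (F : Finset (Fin d → K)) :
    (Fintype.card K : ℝ) * ∑ z : Fin d → K, dotVar F z
      = F.card * (Fintype.card K : ℝ) ^ d * (Fintype.card K - 1) := by
  have hq := (card_field_pos (K := K)).ne'
  have h1 : ∀ y y' : Fin d → K,
      (Fintype.card K : ℝ) * ∑ z : Fin d → K, (if fqDot z (y - y') = 0 then (1 : ℝ) else 0)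
        = (Fintype.card K : ℝ) ^ d
          + if y = y' then (Fintype.card K : ℝ) ^ d * (Fintype.card K - 1) else 0 := by
    intro y y'
    split_ifs with h
    · subst h
      simp [fqDot]
      ring
    · rw [card_hyperplane (sub_ne_zero.mpr h), add_zero]
  simp_rw [dotVar_eq]
  rw [Finset.sum_sub_distrib, mul_sub, Finset.sum_comm]
  simp_rw [Finset.sum_comm (s := (univ : Finset (Fin d → K))) (t := F), Finset.mul_sum (s := F), h1]
  simp [Finset.sum_add_distrib]
  field_simp
  ring

lemma dotVar_nonneg (F : Finset (Fin d → K)) (z : Fin d → K) : 0 ≤ dotVar F z :=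
  Finset.sum_nonneg fun _ _ => sq_nonneg _

lemma dotVar_smul (F : Finset (Fin d → K)) (z : Fin d → K) {s : K} (hs : s ≠ 0) :
    dotVar F (s • z) = dotVar F z := by
  rw [dotVar_eq, dotVar_eq]
  simp [fqDot_smul_left, hs]

/-- A vector is a multiple `s x` of a point `x` on a sphere of radius `j ≠ 0` in at most two ways,
since `s² j` is the squared length of the vector. -/
lemma card_fiber_le_two {j : K} (hj : j ≠ 0) {E : Finset (Fin d → K)} (hE : E ⊆ sphereF j)
    (m : Fin d → K) :
    (((univ.erase (0 : K)) ×ˢ E).filter fun p => p.1 • p.2 = m).card ≤ 2 := by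
  rcases Finset.eq_empty_or_nonempty
    (((univ.erase (0 : K)) ×ˢ E).filter fun p => p.1 • p.2 = m) with h | ⟨⟨s₀, x₀⟩, h₀⟩
  · simp [h]
  have hlen : ∀ p ∈ ((univ.erase (0 : K)) ×ˢ E).filter (fun p => p.1 • p.2 = m),
      p.1 ^ 2 * j = ∑ i, m i ^ 2 := by
    rintro ⟨s, x⟩ hp
    simp only [mem_filter, mem_product] at hp
    have hx := hE hp.1.2
    simp only [sphereF, mem_filter, mem_univ, true_and] at hx
    rw [← hp.2, ← hx]
    simp [mul_pow, Finset.mul_sum]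
  refine le_trans (Finset.card_le_card_of_injOn (t := {s₀, -s₀}) Prod.fst ?_ ?_) card_le_two
  · intro p hp
    have h := (hlen p hp).trans (hlen _ h₀).symm
    have h' := sq_eq_sq_iff_eq_or_eq_neg.mp (mul_right_cancel₀ hj h)
    simpa using h'
  · rintro ⟨s, x⟩ hp ⟨s', x'⟩ hp' hss
    simp only [coe_filter, mem_product, mem_erase, mem_univ, and_true, Set.mem_ofPred_eq] at hp hp'
    obtain rfl : s = s' := hss
    have := hp.2.trans hp'.2.symm
    rw [smul_right_injective _ hp.1.1 this]

lemma card_mul_sum_dotVar_sphere {j : K} (hj : j ≠ 0) {E : Finset (Fin d → K)}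
    (hE : E ⊆ sphereF j) (F : Finset (Fin d → K)) :
    (Fintype.card K : ℝ) * ∑ x ∈ E, dotVar F x ≤ 2 * F.card * (Fintype.card K : ℝ) ^ d := by
  have hq1 : (0 : ℝ) < Fintype.card K - 1 := by
    have : 1 < Fintype.card K := Fintype.one_lt_card
    have : (1 : ℝ) < Fintype.card K := by exact_mod_cast this
    linarith
  have h1 : ((Fintype.card K : ℝ) - 1) * ∑ x ∈ E, dotVar F x
      = ∑ p ∈ (univ.erase (0 : K)) ×ˢ E, dotVar F (p.1 • p.2) := by
    rw [Finset.sum_product, Finset.sum_congr (s₁ := univ.erase (0 : K)) rfl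
      (g := fun _ => ∑ x ∈ E, dotVar F x)]
    · rw [Finset.sum_const, card_erase_of_mem (mem_univ _), card_univ, nsmul_eq_mul,
        Nat.cast_sub Fintype.card_pos, Nat.cast_one]
    · intro s hs
      exact Finset.sum_congr rfl fun x _ => dotVar_smul F x (ne_of_mem_erase hs)
  have h2 : ∑ p ∈ (univ.erase (0 : K)) ×ˢ E, dotVar F (p.1 • p.2)
      ≤ 2 * ∑ z : Fin d → K, dotVar F z := by
    rw [← Finset.sum_fiberwise (s := (univ.erase (0 : K)) ×ˢ E)
      (g := fun p : K × (Fin d → K) => p.1 • p.2), Finset.mul_sum]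
    refine Finset.sum_le_sum fun m _ => ?_
    rw [Finset.sum_congr rfl (g := fun _ => dotVar F m)
      fun p hp => by rw [(mem_filter.mp hp).2], Finset.sum_const, nsmul_eq_mul]
    exact mul_le_mul_of_nonneg_right (by exact_mod_cast card_fiber_le_two hj hE m)
      (dotVar_nonneg F m)
  have h3 := card_mul_sum_dotVar F
  have h4 := mul_le_mul_of_nonneg_left (h1.le.trans h2) (card_field_pos (K := K)).le
  refine le_of_mul_le_mul_right ?_ hq1
  linarith

/-- Cauchy-Schwarz over `x ∈ E`, keeping only the terms with `t ∉ Π(E,F)` on the left side. -/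
lemma compl_dotSet_le (E F : Finset (Fin d → K)) :
    ((Fintype.card K : ℝ) - (dotSet E F).card) * ((E.card * F.card : ℝ) / Fintype.card K) ^ 2
      ≤ E.card * ∑ x ∈ E, dotVar F x := by
  have h0 : ∀ t ∈ (dotSet E F)ᶜ, ∑ x ∈ E, dotCount F x t = 0 := by
    intro t ht
    refine Finset.sum_eq_zero fun x hx => Finset.sum_eq_zero fun y hy => if_neg ?_
    rintro rfl
    exact (mem_compl.mp ht) (mem_image.mpr ⟨(x, y), mem_product.mpr ⟨hx, hy⟩, rfl⟩)
  calc ((Fintype.card K : ℝ) - (dotSet E F).card) * ((E.card * F.card : ℝ) / Fintype.card K) ^ 2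
      = ∑ t ∈ (dotSet E F)ᶜ,
          (∑ x ∈ E, (dotCount F x t - (F.card : ℝ) / Fintype.card K)) ^ 2 := by
        rw [Finset.sum_congr rfl (g := fun _ => ((E.card * F.card : ℝ) / Fintype.card K) ^ 2)]
        · rw [Finset.sum_const, card_compl, nsmul_eq_mul, Nat.cast_sub (card_le_univ _)]
        · intro t ht
          rw [Finset.sum_sub_distrib, h0 t ht, Finset.sum_const, nsmul_eq_mul]
          ring
    _ ≤ ∑ t : K, (∑ x ∈ E, (dotCount F x t - (F.card : ℝ) / Fintype.card K)) ^ 2 :=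
        Finset.sum_le_sum_of_subset_of_nonneg (subset_univ _) fun _ _ _ => sq_nonneg _
    _ ≤ ∑ t : K, E.card * ∑ x ∈ E, (dotCount F x t - (F.card : ℝ) / Fintype.card K) ^ 2 :=
        Finset.sum_le_sum fun t _ => sq_sum_le_card_mul_sum_sq
    _ = E.card * ∑ x ∈ E, dotVar F x := by
        rw [← Finset.mul_sum, Finset.sum_comm]
        rfl

end Helpers

/-- if E lies on a sphere of nonzero radius and |E||F| ≥ C q^d,
then |Π(E,F)| ≥ cq. -/
theorem dotSet_card_sphere (d : ℕ) (hd : 2 ≤ d) :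
    ∃ C : ℝ, 1 < C ∧ ∃ c : ℝ, 0 < c ∧ c < 1 ∧
      ∀ (K : Type) [Field K] [Fintype K] [DecidableEq K],
        Odd (Fintype.card K) →
        ∀ j : K, j ≠ 0 →
        ∀ E F : Finset (Fin d → K), E ⊆ sphereF j →
          ((E.card : ℝ) * (F.card : ℝ) ≥ C * (Fintype.card K : ℝ) ^ d) →
          ((dotSet E F).card : ℝ) ≥ c * (Fintype.card K : ℝ) := by
  refine ⟨4, by norm_num, 1 / 2, by norm_num, by norm_num, ?_⟩
  intro K _ _ _ _ j hj E F hE hN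
  have hq := card_field_pos (K := K)
  have h1 := compl_dotSet_le E F
  have h2 := mul_le_mul_of_nonneg_left (card_mul_sum_dotVar_sphere hj hE F)
    (Nat.cast_nonneg (α := ℝ) E.card)
  set q : ℝ := (Fintype.card K : ℝ)
  set N : ℝ := (E.card : ℝ) * F.card
  set P : ℝ := ((dotSet E F).card : ℝ)
  have hN0 : 0 < N := lt_of_lt_of_le (by positivity) hN
  have h3 : (q - P) * N * N ≤ (2 * q * q ^ d) * N := by
    have h4 : q * q * ((q - P) * (N / q) ^ 2) = (q - P) * N * N := by
      field_simp
    rw [← h4]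
    calc q * q * ((q - P) * (N / q) ^ 2) ≤ q * q * (E.card * ∑ x ∈ E, dotVar F x) :=
          mul_le_mul_of_nonneg_left h1 (by positivity)
      _ = q * (E.card * (q * ∑ x ∈ E, dotVar F x)) := by ring
      _ ≤ q * (E.card * (2 * F.card * q ^ d)) := mul_le_mul_of_nonneg_left h2 hq.le
      _ = (2 * q * q ^ d) * N := by ring
  have h5 : (q - P) * N ≤ 2 * q * q ^ d := le_of_mul_le_mul_right h3 hN0
  have h6 : (q - P) * N ≤ (q / 2) * N := by nlinarith
  have h7 : q - P ≤ q / 2 := le_of_mul_le_mul_right h6 hN0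
  linarith
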